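/- Suppose 𝒫 = ℱ ∘ ℛ and 𝒮 = (𝒱 ∘ ℛ)⁻¹(E), where ℛ(η) = (π_{2,1}#η, …, π_{2,n}#η) is the tuple of one-dimensional marginal distributions of the second (reinsured) component of η, ℱ is a functional on n-tuples of probability measures on ℝ, E is a closed subset of a topological space and 𝒱 is continuous on the image of ℛ. Let η* ∈ 𝒮 minimize 𝒫 over 𝒮, set νᵢ* = π_{2,i}#η*, and suppose each marginal cdf F_{μᵢ} of μ is continuous. Define Rᵢ = F_{νᵢ*}⁻¹ ∘ F_{μᵢ} and let ϑ be the pushforward of μ under the map x ↦ (x, R₁(x₁), …, Rₙ(xₙ)). Then ϑ is a reinsurance treaty (in particular 0 ≤ Rᵢ(xᵢ) ≤ xᵢ), ℛ(ϑ) = ℛ(η*), ϑ ∈ 𝒮, and 𝒫(ϑ) = 𝒫(η*); hence a deterministic optimal reinsurance contract exists whose components are the monotone rearrangements Rᵢ = F_{νᵢ*}⁻¹ ∘ F_{μᵢ}. -/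

import Mathlib

open MeasureTheory Filter Topology Set

noncomputable section

abbrev Vec (n : ℕ) : Type := Fin n → ℝ
abbrev Pt (n : ℕ) : Type := Vec n × Vec n

def treatySet (n : ℕ) : Set (Pt n) := {p | ∀ i, 0 ≤ p.2 i ∧ p.2 i ≤ p.1 i}

def IsTreaty (n : ℕ) (μ : Measure (Vec n)) (η : Measure (Pt n)) : Prop :=
  IsProbabilityMeasure η ∧ η.map Prod.fst = μ ∧ η (treatySet n) = 1

def cdfR (ξ : Measure ℝ) (s : ℝ) : ℝ := (ξ (Iic s)).toReal

def qf (ξ : Measure ℝ) (p : ℝ) : ℝ := sInf {s : ℝ | p ≤ cdfR ξ s}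


theorem aux_qf (α β : Measure ℝ) [IsProbabilityMeasure α] [IsProbabilityMeasure β]
    (hα : ∀ s < 0, cdfR α s = 0) (hβ : ∀ s < 0, cdfR β s = 0)
    (hle : ∀ s, cdfR α s ≤ cdfR β s) (hc : Continuous (cdfR α)) (q : ℝ → ℝ)
    (hq : ∀ s, q s = qf β (cdfR α s)) :
    (∀ s, 0 ≤ q s) ∧ (∀ s, 0 ≤ s → q s ≤ s) ∧ Measurable q ∧ α.map q = β := by
  have ea : cdfR α = ProbabilityTheory.cdf α := by
    ext s; rw [ProbabilityTheory.cdf_eq_real]; rfl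
  have eb : cdfR β = ProbabilityTheory.cdf β := by
    ext s; rw [ProbabilityTheory.cdf_eq_real]; rfl
  have ma : Monotone (cdfR α) := by rw [ea]; exact ProbabilityTheory.monotone_cdf α
  have mb : Monotone (cdfR β) := by rw [eb]; exact ProbabilityTheory.monotone_cdf β
  have na : ∀ s, 0 ≤ cdfR α s := fun s => ENNReal.toReal_nonneg
  have nb : ∀ s, 0 ≤ cdfR β s := fun s => ENNReal.toReal_nonneg
  have q0 : ∀ s, cdfR α s = 0 → q s = 0 := by
    intro s hs
    rw [hq, hs, qf]
    have : {t : ℝ | 0 ≤ cdfR β t} = univ := by ext t; simp [nb]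
    rw [this]
    exact Real.sInf_univ
  have lb : ∀ s, 0 < cdfR α s → ∀ t ∈ {t : ℝ | cdfR α s ≤ cdfR β t}, 0 ≤ t := by
    intro s hs t ht
    by_contra h
    have := hβ t (not_le.1 h)
    simp only [mem_setOf_eq] at ht
    linarith
  have bb : ∀ s, 0 < cdfR α s → BddBelow {t : ℝ | cdfR α s ≤ cdfR β t} :=
    fun s hs => ⟨0, fun t ht => lb s hs t ht⟩
  have qnn : ∀ s, 0 ≤ q s := by
    intro s
    rcases (na s).eq_or_lt with h | h
    · rw [q0 s h.symm]
    · rw [hq, qf]; exact Real.sInf_nonneg (lb s h)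
  have qle : ∀ s, 0 ≤ s → q s ≤ s := by
    intro s hs0
    rcases (na s).eq_or_lt with h | h
    · rw [q0 s h.symm]; exact hs0
    · rw [hq, qf]; exact csInf_le (bb s h) (hle s)
  have qm : Monotone q := by
    intro s t hst
    rcases (na s).eq_or_lt with h | h
    · rw [q0 s h.symm]; exact qnn t
    · rw [hq s, hq t, qf, qf]
      exact csInf_le_csInf (bb s h) ⟨t, hle t⟩ (fun u hu => (ma hst).trans hu)
  have key : ∀ s t, 0 ≤ t → (q s ≤ t ↔ cdfR α s ≤ cdfR β t) := by
    intro s t ht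
    rcases (na s).eq_or_lt with h | h
    · rw [q0 s h.symm, ← h]; exact ⟨fun _ => nb t, fun _ => ht⟩
    · constructor
      · intro hqt
        have hr : Tendsto (cdfR β) (𝓝[>] t) (𝓝 (cdfR β t)) := by
          rw [eb]
          exact ((ProbabilityTheory.cdf β).right_continuous t).tendsto.mono_left
            (nhdsWithin_mono _ Ioi_subset_Ici_self)
        refine ge_of_tendsto hr ?_
        filter_upwards [self_mem_nhdsWithin] with u hu
        have : sInf {t : ℝ | cdfR α s ≤ cdfR β t} < u := by
          have := hq s
          rw [qf] at this
          rw [← this]; exact lt_of_le_of_lt hqt hu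
        obtain ⟨v, hv, hvu⟩ := exists_lt_of_csInf_lt ⟨s, hle s⟩ this
        exact le_trans hv (mb hvu.le)
      · intro hh
        rw [hq, qf]; exact csInf_le (bb s h) hh
  refine ⟨qnn, qle, qm.measurable, ?_⟩
  have : IsProbabilityMeasure (α.map q) :=
    Measure.isProbabilityMeasure_map qm.measurable.aemeasurable
  refine Measure.ext_of_Iic _ _ fun t => ?_
  rw [Measure.map_apply qm.measurable measurableSet_Iic]
  rcases lt_or_ge t 0 with ht | ht
  · have h1 : q ⁻¹' Iic t = ∅ := by
      ext s; simp only [mem_preimage, mem_Iic, mem_empty_iff_false, iff_false, not_le]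
      exact ht.trans_le (qnn s)
    have h2 := hβ t ht
    rw [cdfR, ENNReal.toReal_eq_zero_iff] at h2
    rw [h1, measure_empty, h2.resolve_right (measure_ne_top _ _)]
  · have h1 : q ⁻¹' Iic t = {s | cdfR α s ≤ cdfR β t} := by
      ext s; exact key s t ht
    rw [h1]
    have hb1 : cdfR β t ≤ 1 := by rw [eb]; exact ProbabilityTheory.cdf_le_one β t
    rcases hb1.eq_or_lt with h | h
    · have : {s | cdfR α s ≤ cdfR β t} = univ := by
        ext s; simp only [mem_setOf_eq, mem_univ, iff_true]
        rw [h, ea]; exact ProbabilityTheory.cdf_le_one α s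
      rw [this, measure_univ]
      rw [cdfR] at h
      exact (((ENNReal.toReal_eq_one_iff _).1 h)).symm
    · set c := cdfR β t with hcdef
      have hT : Tendsto (cdfR α) atTop (𝓝 1) := by
        rw [ea]; exact ProbabilityTheory.tendsto_cdf_atTop α
      obtain ⟨M, hM⟩ := (hT.eventually (lt_mem_nhds h)).exists
      have hbd : BddAbove {s | cdfR α s ≤ c} := by
        refine ⟨M, fun s hs => ?_⟩
        by_contra hh
        have := ma (not_le.1 hh).le
        simp only [mem_setOf_eq] at hs
        linarith
      have hne : {s | cdfR α s ≤ c}.Nonempty := by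
        refine ⟨-1, ?_⟩
        simp only [mem_setOf_eq]
        rw [hα (-1) (by norm_num)]; exact nb t
      have hcl : IsClosed {s | cdfR α s ≤ c} := isClosed_le hc continuous_const
      have hmem := hcl.csSup_mem hne hbd
      set a := sSup {s | cdfR α s ≤ c} with ha
      have hset : {s | cdfR α s ≤ c} = Iic a := by
        ext s
        exact ⟨fun hs => le_csSup hbd hs, fun hs => (ma hs).trans hmem⟩
      have hac : cdfR α a = c := by
        refine le_antisymm hmem ?_
        have hr : Tendsto (cdfR α) (𝓝[>] a) (𝓝 (cdfR α a)) :=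
          hc.continuousAt.tendsto.mono_left nhdsWithin_le_nhds
        refine ge_of_tendsto hr ?_
        filter_upwards [self_mem_nhdsWithin] with u hu
        by_contra hh
        exact absurd (le_csSup hbd (not_le.1 hh).le : u ≤ a) (not_le.2 hu)
      rw [hset]
      rw [hcdef, cdfR, cdfR] at hac
      exact (ENNReal.toReal_eq_toReal_iff' (measure_ne_top _ _) (measure_ne_top _ _)).1 hac

/-- if `𝒫 = ℱ ∘ ℛ` and `𝒮 = (𝒱 ∘ ℛ)⁻¹(E)` only depend on a
treaty through the marginal distributions of the reinsured components, `η*` is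
optimal with `νᵢ* = π_{2,i}#η*`, and each marginal cdf `F_{μᵢ}` is continuous,
then the deterministic treaty `ϑ = (Id, R₁ ∘ π₁, …, Rₙ ∘ πₙ)_#μ` built from the
monotone rearrangements `Rᵢ = F_{νᵢ*}⁻¹ ∘ F_{μᵢ}` is a reinsurance treaty
(in particular `0 ≤ Rᵢ(xᵢ) ≤ xᵢ`), has the same image `ℛ(ϑ) = ℛ(η*)`, is
admissible, and satisfies `𝒫(ϑ) = 𝒫(η*)`; hence a deterministic optimal
contract exists. -/
theorem stmt12 (n : ℕ) (μ : Measure (Vec n)) [IsProbabilityMeasure μ]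
    {O : Type} [TopologicalSpace O]
    (F : (Fin n → ProbabilityMeasure ℝ) → ℝ)
    (V : (Fin n → ProbabilityMeasure ℝ) → O)
    (E : Set O) (hE : IsClosed E)
    (R : ProbabilityMeasure (Pt n) → Fin n → ProbabilityMeasure ℝ)
    (hR : ∀ (η : ProbabilityMeasure (Pt n)) (i : Fin n),
      (R η i : Measure ℝ) = η.toMeasure.map fun q : Pt n => q.2 i)
    (hV : ContinuousOn V (Set.range R))
    (ηs : ProbabilityMeasure (Pt n))
    (hηs : IsTreaty n μ ηs.toMeasure) (hηsS : V (R ηs) ∈ E)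
    (hopt : ∀ η : ProbabilityMeasure (Pt n),
      IsTreaty n μ η.toMeasure → V (R η) ∈ E → F (R ηs) ≤ F (R η))
    (hcdf : ∀ i : Fin n, Continuous fun s : ℝ => cdfR (μ.map fun z : Vec n => z i) s)
    (Rf : Fin n → ℝ → ℝ)
    (hRf : ∀ (i : Fin n) (s : ℝ),
      Rf i s = qf (ηs.toMeasure.map fun q : Pt n => q.2 i)
        (cdfR (μ.map fun z : Vec n => z i) s)) :
    (∀ (i : Fin n) (s : ℝ), 0 ≤ s → 0 ≤ Rf i s ∧ Rf i s ≤ s) ∧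
    ∃ ϑ : ProbabilityMeasure (Pt n),
      ϑ.toMeasure = μ.map (fun z : Vec n => (z, fun i => Rf i (z i))) ∧
      IsTreaty n μ ϑ.toMeasure ∧
      R ϑ = R ηs ∧ V (R ϑ) ∈ E ∧ F (R ϑ) = F (R ηs) := by
  obtain ⟨-, hfst, hA⟩ := hηs
  have hAm : MeasurableSet (treatySet n) := by
    have : treatySet n = ⋂ i, ({p : Pt n | 0 ≤ p.2 i} ∩ {p : Pt n | p.2 i ≤ p.1 i}) := by
      ext p; simp [treatySet]
    rw [this]
    refine MeasurableSet.iInter fun i => MeasurableSet.inter ?_ ?_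
    · exact measurableSet_le measurable_const (by fun_prop)
    · exact measurableSet_le (by fun_prop) (by fun_prop)
  have hae : ∀ᵐ p ∂(ηs : Measure (Pt n)), p ∈ treatySet n :=
    (prob_compl_eq_zero_iff hAm).2 hA
  have m2 : ∀ i, Measurable fun q : Pt n => q.2 i := fun i => by fun_prop
  have m1 : ∀ i, Measurable fun q : Pt n => q.1 i := fun i => by fun_prop
  have mz : ∀ i, Measurable fun z : Vec n => z i := fun i => by fun_prop
  have hmi : ∀ i, μ.map (fun z : Vec n => z i) =
      (ηs : Measure (Pt n)).map fun q : Pt n => q.1 i := by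
    intro i
    rw [← hfst, Measure.map_map (mz i) measurable_fst]; rfl
  have main : ∀ i, (∀ s, 0 ≤ Rf i s) ∧ (∀ s, 0 ≤ s → Rf i s ≤ s) ∧ Measurable (Rf i) ∧
      (μ.map fun z : Vec n => z i).map (Rf i) =
        (ηs : Measure (Pt n)).map fun q : Pt n => q.2 i := by
    intro i
    have p1 : IsProbabilityMeasure (μ.map fun z : Vec n => z i) :=
      Measure.isProbabilityMeasure_map (mz i).aemeasurable
    have p2 : IsProbabilityMeasure ((ηs : Measure (Pt n)).map fun q : Pt n => q.2 i) :=
      Measure.isProbabilityMeasure_map (m2 i).aemeasurable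
    refine aux_qf _ _ ?_ ?_ ?_ (hcdf i) (Rf i) (hRf i)
    · intro s hs
      rw [cdfR, hmi, Measure.map_apply (m1 i) measurableSet_Iic, ENNReal.toReal_eq_zero_iff]
      left
      refine measure_mono_null ?_ hae
      intro p hp hp2
      have h1 : p.1 i ≤ s := hp
      have := hp2 i
      linarith [this.1, this.2]
    · intro s hs
      rw [cdfR, Measure.map_apply (m2 i) measurableSet_Iic, ENNReal.toReal_eq_zero_iff]
      left
      refine measure_mono_null ?_ hae
      intro p hp hp2
      have h1 : p.2 i ≤ s := hp
      have := hp2 i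
      linarith [this.1, this.2]
    · intro s
      rw [cdfR, cdfR]
      refine ENNReal.toReal_mono (measure_ne_top _ _) ?_
      rw [hmi, Measure.map_apply (m1 i) measurableSet_Iic,
        Measure.map_apply (m2 i) measurableSet_Iic]
      refine measure_mono_ae ?_
      filter_upwards [hae] with p hp
      intro (h1 : p.1 i ≤ s)
      exact (hp i).2.trans h1
  have hT : Measurable (fun z : Vec n => ((z, fun i => Rf i (z i)) : Pt n)) :=
    measurable_id.prodMk (measurable_pi_lambda _ fun i => (main i).2.2.1.comp (mz i))
  have hP : IsProbabilityMeasure (μ.map (fun z : Vec n => ((z, fun i => Rf i (z i)) : Pt n))) :=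
    Measure.isProbabilityMeasure_map hT.aemeasurable
  have hRR : R ⟨_, hP⟩ = R ηs := by
    funext i
    apply Subtype.ext
    refine (hR _ i).trans (Eq.trans ?_ (hR ηs i).symm)
    rw [← (main i).2.2.2, Measure.map_map (main i).2.2.1 (mz i)]
    exact Measure.map_map (m2 i) hT
  refine ⟨fun i s hs => ⟨(main i).1 s, (main i).2.1 s hs⟩, ⟨_, hP⟩, rfl, ⟨hP, ?_, ?_⟩, hRR, ?_, ?_⟩
  · refine (Measure.map_map measurable_fst hT).trans ?_
    exact Measure.map_id
  · refine (Measure.map_apply hT hAm).trans ?_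
    refine (prob_compl_eq_zero_iff (hT hAm)).1 ?_
    have hz : ∀ᵐ z ∂μ, ∀ i, 0 ≤ z i := by
      rw [← hfst]
      rw [ae_map_iff measurable_fst.aemeasurable]
      · filter_upwards [hae] with p hp i
        exact (hp i).1.trans (hp i).2
      · rw [setOf_forall]
        exact MeasurableSet.iInter fun i => measurableSet_le measurable_const (mz i)
    refine measure_mono_null ?_ hz
    intro z hz1 hz2
    exact hz1 fun i => ⟨(main i).1 _, (main i).2.1 _ (hz2 i)⟩
  · rw [hRR]; exact hηsS
  · rw [hRR]
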